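/- Let N ∈ ℕ, let ε > 0 and δ > 0 be real numbers, let S, B : ℕ → ℝ with B_n > 0 for all n, and set S†_n := S_n/B_n. Assume Σ_{i=1}^{N} (S†_i − S†_{i−1})² ≤ ε. Let τ be the least n ≤ N such that |S†_n − S†_0| ≥ δ, and τ := N if no such n exists. Set M_i := (2/ε)·(S†_{i−1} − S†_0) for i ≤ τ and M_i := 0 for i > τ, and let I : ℕ → ℝ be defined by I_0 := B_0 and I_n := (I_{n−1} − M_n·S_{n−1})·(B_n/B_{n−1}) + M_n·S_n for n ≥ 1. Then: (i) I_n ≥ 0 for every n ≤ N; and (ii) if |S†_n − S†_0| ≥ δ for some n ≤ N, then I_N ≥ (δ²/ε)·B_N. (Finitary low-volatility theorem with non-zero interest rate: if the discounted price S/B has quadratic variation at most ε but moves by δ, the speculator multiplies an initial capital of one unit of B by at least δ²/ε, measured in units of B.) -/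

import Mathlib

/-!
In units of the numéraire the capital `J = I / B` evolves by
`J (n + 1) = J n + M (n + 1) * (S† (n + 1) - S† n)`. Summation by parts,
`2 (a - c) (b - a) = (b - c) ^ 2 - (a - c) ^ 2 - (b - a) ^ 2`, gives the closed form
`J n = 1 + ((S† m - S† 0) ^ 2 - Q m) / ε` with `m = min n τ` and `Q` the quadratic variation of
`S†` (`capital_closed_form`). Since `Q m ≤ Q N ≤ ε`, this yields
`J n ≥ (S† m - S† 0) ^ 2 / ε ≥ 0`, and at `n = N` the hitting condition bounds the square below
by `δ ^ 2`.
-/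

open Classical in
/-- The first time `n ≤ N` at which `|g n| ≥ δ`; equal to `N` if there is no such time. -/
noncomputable def hitTime (g : ℕ → ℝ) (δ : ℝ) (N : ℕ) : ℕ :=
  if h : ∃ n, n ≤ N ∧ δ ≤ |g n| then Nat.find h else N

/-- The price of the security `S` measured in units of the numéraire `B`. -/
noncomputable def Sdag (S B : ℕ → ℝ) (n : ℕ) : ℝ := S n / B n

theorem hitTime_le (g : ℕ → ℝ) (δ : ℝ) (N : ℕ) : hitTime g δ N ≤ N := by
  classical
  unfold hitTime
  split_ifs with h
  · exact (Nat.find_spec h).1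
  · exact le_rfl

theorem le_abs_hitTime (g : ℕ → ℝ) (δ : ℝ) (N : ℕ) (h : ∃ n, n ≤ N ∧ δ ≤ |g n|) :
    δ ≤ |g (hitTime g δ N)| := by
  classical
  unfold hitTime
  rw [dif_pos h]
  exact (Nat.find_spec h).2

/-- The capital of the strategy stopped at an arbitrary time `τ`, in closed form. -/
theorem capital_closed_form (τ : ℕ) (ε : ℝ) (hε : 0 < ε)
    (S B : ℕ → ℝ) (hB : ∀ n, 0 < B n) (M I : ℕ → ℝ)
    (hM : ∀ i, M i = if i ≤ τ then (2 / ε) * (Sdag S B (i - 1) - Sdag S B 0) else 0)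
    (hI0 : I 0 = B 0)
    (hrec : ∀ n, I (n + 1) =
      (I n - M (n + 1) * S n) * (B (n + 1) / B n) + M (n + 1) * S (n + 1)) (n : ℕ) :
    I n = B n * (1 + ((Sdag S B (min n τ) - Sdag S B 0) ^ 2
      - ∑ i ∈ Finset.range (min n τ), (Sdag S B (i + 1) - Sdag S B i) ^ 2) / ε) := by
  induction n with
  | zero => simp [hI0]
  | succ n ih =>
    have hS : ∀ k, S k = B k * Sdag S B k := fun k => by
      have := (hB k).ne'
      unfold Sdag
      field_simp
    have hn := (hB n).ne'
    rw [hrec, hM, hS n, hS (n + 1), ih]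
    by_cases h : n + 1 ≤ τ
    · rw [if_pos h, min_eq_left h, min_eq_left (by omega : n ≤ τ), Finset.sum_range_succ,
        Nat.add_sub_cancel]
      field_simp
      ring
    · rw [if_neg h, min_eq_right (by omega : τ ≤ n + 1), min_eq_right (by omega : τ ≤ n)]
      field_simp
      ring

/-- Finitary low-volatility theorem with non-zero interest rate: if the discounted price
`S† = S/B` has quadratic variation at most `ε`, then the capital process starting from
one unit of `B` of the strategy betting `M_i = (2/ε)(S†_{i-1} - S†_0)` up to the first
time `τ ≤ N` at which `|S†_n - S†_0| ≥ δ` (and `0` afterwards) stays nonnegative, and if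
the discounted price moves by at least `δ` at some `n ≤ N`, the final capital is at
least `(δ²/ε) B_N`. -/
theorem low_volatility_numeraire (N : ℕ) (ε δ : ℝ) (hε : 0 < ε) (hδ : 0 < δ)
    (S B : ℕ → ℝ) (hB : ∀ n, 0 < B n)
    (hQV : ∑ i ∈ Finset.range N, (Sdag S B (i + 1) - Sdag S B i) ^ 2 ≤ ε)
    (M I : ℕ → ℝ)
    (hM : ∀ i, M i =
      if i ≤ hitTime (fun k => Sdag S B k - Sdag S B 0) δ N
        then (2 / ε) * (Sdag S B (i - 1) - Sdag S B 0) else 0)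
    (hI0 : I 0 = B 0)
    (hrec : ∀ n, I (n + 1) =
      (I n - M (n + 1) * S n) * (B (n + 1) / B n) + M (n + 1) * S (n + 1)) :
    (∀ n ≤ N, 0 ≤ I n) ∧
      ((∃ n ≤ N, δ ≤ |Sdag S B n - Sdag S B 0|) → (δ ^ 2 / ε) * B N ≤ I N) := by
  set τ := hitTime (fun k => Sdag S B k - Sdag S B 0) δ N with hτ
  have hτN : τ ≤ N := hitTime_le _ _ _
  have key : ∀ n ≤ N, (Sdag S B (min n τ) - Sdag S B 0) ^ 2 / ε * B n ≤ I n := by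
    intro n hn
    rw [capital_closed_form τ ε hε S B hB M I hM hI0 hrec n, mul_comm]
    refine mul_le_mul_of_nonneg_left ?_ (hB n).le
    have hQ : ∑ i ∈ Finset.range (min n τ), (Sdag S B (i + 1) - Sdag S B i) ^ 2 ≤ ε :=
      (Finset.sum_le_sum_of_subset_of_nonneg
        (Finset.range_mono ((min_le_left n τ).trans hn))
        (fun _ _ _ => sq_nonneg _)).trans hQV
    have := (div_le_one hε).2 hQ
    rw [sub_div]
    linarith
  refine ⟨fun n hn => le_trans ?_ (key n hn), fun h => le_trans ?_ (key N le_rfl)⟩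
  · have := hB n
    positivity
  · have hhit := le_abs_hitTime (fun k => Sdag S B k - Sdag S B 0) δ N h
    rw [min_eq_right hτN]
    have hsq : δ ^ 2 ≤ (Sdag S B τ - Sdag S B 0) ^ 2 := by
      rw [← sq_abs (Sdag S B τ - Sdag S B 0)]
      exact pow_le_pow_left₀ hδ.le hhit 2
    have := (hB N).le
    gcongr
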